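/- arXiv:1301.6419 — 2 statements merged into one kernel-verified Lean document; each statement's English description precedes it below -/
import Mathlib

section
/- Let G be a branch group acting on a rooted tree T, let H be a subgroup of finite index in G and let K be a normal subgroup of H. Then there exists n_0 such that for every integer n ≥ n_0 there is a union X of H-orbits in L_n such that: rist_G(X)' ≤ K, the subgroups K and rist_G(L_n \ X) intersect trivially and commute elementwise (i.e. K ∩ rist_G(L_n \ X) = 1 and [K, rist_G(L_n \ X)] = 1), and consequently K ∩ rist_G(n)' = rist_G(X)'. -/
/-!  Common definitions: rooted trees of type `(m n)`, tree automorphisms,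
rigid stabilizers, branch groups, and auxiliary notions. -/

universe u

/-- Vertices of the rooted tree of type `m`: finite sequences `(x_0, …, x_{n-1})`
with `x_i ∈ {1, …, m i}` (encoded as `Fin (m i)`). -/
def Vertex (m : ℕ → ℕ) : Type := Σ n : ℕ, ∀ i : Fin n, Fin (m i)

namespace Vertex

variable {m : ℕ → ℕ}

/-- The level of a vertex: its length. -/
def level (v : Vertex m) : ℕ := v.1

/-- `v` is a (weak) prefix of `w`; i.e. `w` lies in the subtree `T_v`
(`w = v` or `w` is a descendant of `v`). -/
def IsPrefix (v w : Vertex m) : Prop :=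
  ∃ h : v.1 ≤ w.1, ∀ i : Fin v.1, w.2 (Fin.castLE h i) = v.2 i

/-- `w` is a child (one-step extension) of `v`. -/
def IsChild (v w : Vertex m) : Prop := w.1 = v.1 + 1 ∧ IsPrefix v w

end Vertex

/-- The `n`-th layer `L_n` of the tree: all vertices of level `n`. -/
def layer (m : ℕ → ℕ) (n : ℕ) : Set (Vertex m) := {v | v.1 = n}

section Rist

variable {m : ℕ → ℕ} (G : Type*) [Group G] [MulAction G (Vertex m)]

/-- The rigid stabilizer of a vertex `v`: all elements fixing every vertex
outside the subtree `T_v`. -/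
def rist (v : Vertex m) : Subgroup G :=
  ⨅ w ∈ {w : Vertex m | ¬ Vertex.IsPrefix v w}, MulAction.stabilizer G w

/-- The subgroup generated by the rigid stabilizers of the vertices in `X`. -/
def ristSet (X : Set (Vertex m)) : Subgroup G := ⨆ v ∈ X, rist G v

/-- `rist_G(n)`, the rigid stabilizer of the `n`-th layer. -/
def ristLayer (m : ℕ → ℕ) (G : Type*) [Group G] [MulAction G (Vertex m)] (n : ℕ) :
    Subgroup G :=
  ristSet G (layer m n)

/-- The orbit of the vertex `v` under a subgroup `H ≤ G`. -/
def subOrbit (H : Subgroup G) (v : Vertex m) : Set (Vertex m) :=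
  {w | ∃ h ∈ H, h • v = w}

/-- The set of orbits of a subgroup `H ≤ G` on a set `X` of vertices. -/
def orbitsOn (H : Subgroup G) (X : Set (Vertex m)) : Set (Set (Vertex m)) :=
  (fun v => subOrbit G H v) '' X

end Rist

/-- `G` is a branch group on the rooted tree of type `m` (with respect to the given
action): the action is faithful and by tree automorphisms, `G` acts transitively on
each layer, and each `rist_G(n)` has finite index in `G`. -/
structure IsBranchGroup (m : ℕ → ℕ) (G : Type*) [Group G] [MulAction G (Vertex m)] :
    Prop where
  faithful : ∀ g : G, (∀ v : Vertex m, g • v = v) → g = 1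
  aut : ∀ (g : G) (v w : Vertex m), Vertex.IsChild v w ↔ Vertex.IsChild (g • v) (g • w)
  trans : ∀ v w : Vertex m, v.1 = w.1 → ∃ g : G, g • v = w
  ristFiniteIndex : ∀ n : ℕ, (ristLayer m G n).FiniteIndex

/-- A group is virtually soluble if it has a soluble subgroup of finite index. -/
def VirtuallySolvable (Γ : Type*) [Group Γ] : Prop :=
  ∃ S : Subgroup Γ, S.FiniteIndex ∧ IsSolvable ↥S

/-- A group is virtually abelian if it has an abelian subgroup of finite index. -/
def VirtuallyAbelian (Γ : Type*) [Group Γ] : Prop :=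
  ∃ S : Subgroup Γ, S.FiniteIndex ∧ ∀ a ∈ S, ∀ b ∈ S, a * b = b * a

/-- For subgroups `A ≤ B` of a group with `A` normalised by `B`, this says that the
factor `B/A` belongs to the class `𝔛`. -/
def FactorIn (𝔛 : (Γ : Type u) → [inst : Group Γ] → Prop) {G : Type u} [Group G]
    (A B : Subgroup G) : Prop :=
  ∃ hn : (A.subgroupOf B).Normal, letI := hn; 𝔛 (↥B ⧸ A.subgroupOf B)

/-- The factor `B/A` is virtually soluble. -/
def FactorVirtuallySolvable {G : Type*} [Group G] (A B : Subgroup G) : Prop :=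
  ∃ hn : (A.subgroupOf B).Normal,
    letI := hn; VirtuallySolvable (↥B ⧸ A.subgroupOf B)

/-- The factor `B/A` is virtually abelian. -/
def FactorVirtuallyAbelian {G : Type*} [Group G] (A B : Subgroup G) : Prop :=
  ∃ hn : (A.subgroupOf B).Normal,
    letI := hn; VirtuallyAbelian (↥B ⧸ A.subgroupOf B)

/-- `Γ` has `r` infinite normal subgroups that generate their direct product in `Γ`:
each of them intersects trivially the subgroup generated by the others. -/
def HasIndepFamily (Γ : Type*) [Group Γ] (r : ℕ) : Prop :=
  ∃ N : Fin r → Subgroup Γ, (∀ i, (N i).Normal) ∧ (∀ i, Infinite ↥(N i)) ∧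
    ∀ i, N i ⊓ (⨆ j ∈ ({i}ᶜ : Set (Fin r)), N j) = ⊥

section Aux

open scoped commutatorElement

variable {m : ℕ → ℕ}

theorem vext {u v w : Vertex m} (hu : u.IsPrefix w) (hv : v.IsPrefix w) (h : u.1 = v.1) :
    u = v := by
  obtain ⟨a, f⟩ := u
  obtain ⟨b, g⟩ := v
  dsimp at h
  subst h
  obtain ⟨h1, h2⟩ := hu
  obtain ⟨h3, h4⟩ := hv
  have : f = g := by
    funext i
    exact (h2 i).symm.trans (h4 i)
  rw [this]

theorem prefix_refl (v : Vertex m) : v.IsPrefix v := ⟨le_refl _, fun _ => rfl⟩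

theorem prefix_trans {u v w : Vertex m} (h : u.IsPrefix v) (h' : v.IsPrefix w) :
    u.IsPrefix w := by
  obtain ⟨h1, h2⟩ := h
  obtain ⟨h3, h4⟩ := h'
  refine ⟨h1.trans h3, fun i => ?_⟩
  rw [← h2 i, ← h4 (Fin.castLE h1 i)]
  rfl

theorem exists_trunc (w : Vertex m) (n : ℕ) (h : n ≤ w.1) :
    ∃ u : Vertex m, u.1 = n ∧ u.IsPrefix w :=
  ⟨⟨n, fun i => w.2 (Fin.castLE h i)⟩, rfl, h, fun _ => rfl⟩

theorem prefix_of_le {u v w : Vertex m} (hu : u.IsPrefix w) (hv : v.IsPrefix w)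
    (h : u.1 ≤ v.1) : u.IsPrefix v := by
  obtain ⟨t, ht, htv⟩ := exists_trunc v u.1 h
  have := vext hu (prefix_trans htv hv) ht.symm
  rw [this]; exact htv

theorem exists_children (hm : ∀ n, 2 ≤ m n) (v : Vertex m) :
    ∃ a b : Vertex m, a.1 = v.1 + 1 ∧ b.1 = v.1 + 1 ∧ v.IsPrefix a ∧ v.IsPrefix b ∧ a ≠ b := by
  let c : Fin 2 → Vertex m := fun k => ⟨v.1 + 1, fun i =>
    if h : (i : ℕ) < v.1 then v.2 ⟨i, h⟩ else ⟨k, lt_of_lt_of_le k.2 (hm i)⟩⟩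
  have hc : ∀ k, v.IsPrefix (c k) := by
    intro k
    refine ⟨Nat.le_succ _, fun i => ?_⟩
    simp [c]
  refine ⟨c 0, c 1, rfl, rfl, hc 0, hc 1, fun h => ?_⟩
  have h2 := eq_of_heq (Sigma.mk.inj h).2
  have h3 := congrFun h2 (Fin.last v.1)
  simp at h3

theorem layer_finite (n : ℕ) : (layer m n).Finite := by
  have : layer m n ⊆ Set.range (fun f : (∀ i : Fin n, Fin (m i)) => (⟨n, f⟩ : Vertex m)) := by
    rintro ⟨a, f⟩ h
    have h : a = n := h
    subst h
    exact ⟨f, rfl⟩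
  exact (Set.finite_range _).subset this

variable {G : Type*} [Group G] [MulAction G (Vertex m)]

theorem smul_level (hG : IsBranchGroup m G) (g : G) (v : Vertex m) : (g • v).1 = v.1 := by
  obtain ⟨n, hn⟩ : ∃ n, v.1 = n := ⟨_, rfl⟩
  induction n generalizing v with
  | zero =>
    rw [hn]
    by_contra hne
    obtain ⟨k, hk⟩ := Nat.exists_eq_succ_of_ne_zero hne
    obtain ⟨p, hp, hpv⟩ := exists_trunc (g • v) k (by omega)
    have : Vertex.IsChild p (g • v) := ⟨by omega, hpv⟩
    have h2 := (hG.aut g⁻¹ _ _).1 this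
    rw [inv_smul_smul] at h2
    have := h2.1
    omega
  | succ n ih =>
    obtain ⟨p, hp, hpv⟩ := exists_trunc v n (by omega)
    have : Vertex.IsChild p v := ⟨by omega, hpv⟩
    have h2 := (hG.aut g _ _).1 this
    have := h2.1
    have := ih p hp
    omega

theorem smul_prefix (hG : IsBranchGroup m G) (g : G) {v w : Vertex m} (h : v.IsPrefix w) :
    (g • v).IsPrefix (g • w) := by
  obtain ⟨d, hd⟩ : ∃ d, w.1 = v.1 + d := ⟨w.1 - v.1, by have := h.1; omega⟩
  induction d generalizing w with
  | zero =>
    rw [vext h (prefix_refl w) (by omega)]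
    exact prefix_refl _
  | succ d ih =>
    obtain ⟨p, hp, hpw⟩ := exists_trunc w (v.1 + d) (by omega)
    have h1 : Vertex.IsChild p w := ⟨by omega, hpw⟩
    exact prefix_trans (ih (prefix_of_le h hpw (by omega)) hp) ((hG.aut g _ _).1 h1).2

theorem smul_prefix_iff (hG : IsBranchGroup m G) (g : G) {v w : Vertex m} :
    (g • v).IsPrefix (g • w) ↔ v.IsPrefix w := by
  refine ⟨fun h => ?_, smul_prefix hG g⟩
  simpa using smul_prefix hG g⁻¹ h

theorem stab_le (hG : IsBranchGroup m G) {v w : Vertex m} (h : v.IsPrefix w) {g : G}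
    (hg : g • w = w) : g • v = v := by
  have := smul_prefix hG g h
  rw [hg] at this
  exact vext this h (smul_level hG g v)

theorem mem_rist {v : Vertex m} {g : G} :
    g ∈ rist G v ↔ ∀ w : Vertex m, ¬ v.IsPrefix w → g • w = w := by
  simp [rist, Subgroup.mem_iInf]

theorem rist_mono {v w : Vertex m} (h : v.IsPrefix w) : rist G w ≤ rist G v := by
  intro g hg
  rw [mem_rist] at *
  exact fun u hu => hg u fun hw => hu (prefix_trans h hw)

theorem rist_conj (hG : IsBranchGroup m G) (g : G) {v : Vertex m} {x : G} (hx : x ∈ rist G v) :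
    g * x * g⁻¹ ∈ rist G (g • v) := by
  rw [mem_rist] at *
  intro w hw
  have : ¬ v.IsPrefix (g⁻¹ • w) := by
    intro h
    apply hw
    simpa using smul_prefix hG g h
  rw [mul_smul, mul_smul, hx _ this, smul_inv_smul]

theorem mem_ristSet {W : Set (Vertex m)} {g : G} (hg : g ∈ ristSet G W) (w : Vertex m)
    (hw : ∀ v ∈ W, ¬ v.IsPrefix w) : g • w = w := by
  have : ristSet G W ≤ MulAction.stabilizer G w := by
    refine iSup₂_le fun v hv x hx => ?_
    exact mem_rist.1 hx w (hw v hv)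
  exact this hg

theorem rist_le_ristSet {W : Set (Vertex m)} {v : Vertex m} (hv : v ∈ W) :
    rist G v ≤ ristSet G W := le_iSup₂_of_le v hv le_rfl

theorem ristSet_mono {W V : Set (Vertex m)} (h : W ⊆ V) : ristSet G W ≤ ristSet G V :=
  iSup₂_le fun _ hv => rist_le_ristSet (h hv)

/-- an element of `rist v` commutes with anything that fixes `T_v` -/
theorem rist_comm (hG : IsBranchGroup m G) {v : Vertex m} {x k : G} (hx : x ∈ rist G v)
    (hk : ∀ w, v.IsPrefix w → k • w = w) : k * x = x * k := by
  have key : (x * k)⁻¹ * (k * x) = 1 := by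
    apply hG.faithful
    intro w
    rw [mul_smul, inv_smul_eq_iff, mul_smul, mul_smul]
    by_cases h : v.IsPrefix w
    · rw [hk w h]
      apply hk
      by_contra h2
      have h3 := mem_rist.1 hx _ h2
      have h4 : x • w = w := by
        have := congrArg (fun t => x⁻¹ • t) h3
        simpa using this
      rw [h4] at h2
      exact h2 h
    · rw [mem_rist.1 hx w h]
      symm
      apply mem_rist.1 hx
      intro h2
      apply h
      have h3 := hk _ h2
      have h4 : k • w = w := by
        have := congrArg (fun t => k⁻¹ • t) h3
        simpa using this
      rwa [h4] at h2
  exact (inv_mul_eq_one.1 key).symm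

theorem rist_fix {u v : Vertex m} (huv : u.1 = v.1) (hne : u ≠ v) {x : G}
    (hx : x ∈ rist G u) : ∀ w, v.IsPrefix w → x • w = w := by
  intro w hw
  apply mem_rist.1 hx
  exact fun h => hne (vext h hw huv)

theorem rist_disj (hG : IsBranchGroup m G) {u v : Vertex m} (huv : u.1 = v.1) (hne : u ≠ v) {x : G}
    (hx : x ∈ rist G u) (hx' : x ∈ rist G v) : x = 1 := by
  apply hG.faithful
  intro w
  by_cases h : v.IsPrefix w
  · exact rist_fix huv hne hx w h
  · exact mem_rist.1 hx' w h

/-- key commutator computation -/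
theorem key_comm (hG : IsBranchGroup m G) {H K : Subgroup G}
    (hKn : ∀ h ∈ H, ∀ k ∈ K, h * k * h⁻¹ ∈ K) {v : Vertex m} {k : G} (hk : k ∈ K)
    (hkv : k • v ≠ v) : ⁅rist G v ⊓ H, rist G v ⊓ H⁆ ≤ K := by
  rw [Subgroup.commutator_le]
  intro f hf g hg
  have hf' : f⁻¹ ∈ rist G v ⊓ H := inv_mem hf
  set e := f⁻¹ with he
  have c1 : k * e * k⁻¹ * e⁻¹ ∈ K := by
    have h1 : e * k⁻¹ * e⁻¹ ∈ K := hKn e hf'.2 _ (inv_mem hk)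
    have := mul_mem hk h1
    simpa [mul_assoc] using this
  set p := k * e * k⁻¹ with hp
  have hpr : p ∈ rist G (k • v) := rist_conj hG k hf'.1
  have hfix := rist_fix (smul_level hG k v) hkv hpr
  have pg : p * g = g * p := rist_comm hG hg.1 hfix
  have pe : p * e = e * p := rist_comm hG hf'.1 hfix
  have c2 : (p * e⁻¹) * (g * (p * e⁻¹)⁻¹ * g⁻¹) ∈ K := mul_mem c1 (hKn g hg.2 _ (inv_mem c1))
  have h5 : (p * e⁻¹) * (g * (p * e⁻¹)⁻¹ * g⁻¹) = f * g * f⁻¹ * g⁻¹ := by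
    have cpe : Commute p e := pe
    have cpg : Commute p g := pg
    have cp : Commute p (e⁻¹ * g * e) := (cpe.inv_right.mul_right cpg).mul_right cpe
    have : (p * e⁻¹) * (g * (p * e⁻¹)⁻¹ * g⁻¹) = (p * (e⁻¹ * g * e)) * p⁻¹ * g⁻¹ := by group
    rw [this, cp.eq, he]
    group
  rw [h5] at c2
  exact c2

theorem infinite_G (hm : ∀ n, 2 ≤ m n) (hG : IsBranchGroup m G) : Infinite G := by
  by_contra hfin
  rw [not_infinite_iff_finite] at hfin
  let n := Nat.card G
  have hm0 : ∀ i, 0 < m i := fun i => lt_of_lt_of_le (by norm_num) (hm i)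
  let v : Vertex m := ⟨n, fun i => ⟨0, hm0 i⟩⟩
  have hex : ∀ f : (∀ i : Fin n, Fin (m i)), ∃ g : G, g • v = (⟨n, f⟩ : Vertex m) :=
    fun f => hG.trans v ⟨n, f⟩ rfl
  choose φ hφ using hex
  have inj : Function.Injective φ := by
    intro a b hab
    have h := hφ a
    rw [hab, hφ b] at h
    exact (eq_of_heq (Sigma.mk.inj h).2).symm
  have h1 := Nat.card_le_card_of_injective φ inj
  rw [Nat.card_pi] at h1
  have h2 : 2 ^ n ≤ ∏ i : Fin n, Nat.card (Fin (m i)) := by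
    have := Finset.pow_card_le_prod (Finset.univ : Finset (Fin n))
      (fun i => Nat.card (Fin (m i))) 2 (by intro i _; simpa using hm i)
    simpa using this
  have h3 : n < 2 ^ n := Nat.lt_two_pow_self
  have h4 : n = Nat.card G := rfl
  omega

theorem rist_ne_bot (hm : ∀ n, 2 ≤ m n) (hG : IsBranchGroup m G) (v : Vertex m) :
    rist G v ≠ ⊥ := by
  intro h
  have hb : ristLayer m G v.1 = ⊥ := by
    rw [ristLayer, ristSet, eq_bot_iff]
    refine iSup₂_le fun w hw x hx => ?_
    obtain ⟨g, hg⟩ := hG.trans w v hw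
    have := rist_conj hG g hx
    rw [hg, h, Subgroup.mem_bot] at this
    rw [Subgroup.mem_bot]
    exact conj_eq_one_iff.1 this
  have h1 := (hG.ristFiniteIndex v.1).index_ne_zero
  rw [hb, Subgroup.index_bot] at h1
  have := infinite_G hm hG
  exact h1 Nat.card_eq_zero_of_infinite

theorem ristN_ne_bot (hm : ∀ n, 2 ≤ m n) (hG : IsBranchGroup m G) (N : Subgroup G)
    [N.FiniteIndex] (v : Vertex m) : rist G v ⊓ N ≠ ⊥ := by
  intro h
  have : Finite (G ⧸ N) := inferInstance
  have hfin : Finite (rist G v) := by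
    apply Finite.of_injective (fun x : rist G v => (QuotientGroup.mk (x : G) : G ⧸ N))
    intro a b hab
    have h1 := QuotientGroup.eq.1 hab
    have h2 : (a : G)⁻¹ * b ∈ rist G v ⊓ N := ⟨(rist G v).mul_mem ((rist G v).inv_mem a.2) b.2, h1⟩
    rw [h, Subgroup.mem_bot] at h2
    exact Subtype.ext (inv_mul_eq_one.1 h2)
  have hne : Nonempty {w : Vertex m // v.IsPrefix w} := ⟨⟨v, prefix_refl v⟩⟩
  let F : {w : Vertex m // v.IsPrefix w} → ℕ := fun w => Nat.card (rist G w.1)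
  let w := Function.argmin F
  have hle : ∀ u, F w ≤ F u := fun u => Function.argmin_le F u
  obtain ⟨a, b, ha, hb, hva, hvb, hab⟩ := exists_children hm w.1
  have hfw : Finite (rist G w.1) :=
    Finite.of_injective _ (Subgroup.inclusion_injective (rist_mono (G := G) w.2))
  have e1 := Subgroup.eq_of_le_of_card_ge (rist_mono (G := G) hva) (hle ⟨a, prefix_trans w.2 hva⟩)
  have e2 := Subgroup.eq_of_le_of_card_ge (rist_mono (G := G) hvb) (hle ⟨b, prefix_trans w.2 hvb⟩)
  apply rist_ne_bot hm hG w.1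
  rw [eq_bot_iff]
  intro x hx
  exact rist_disj hG (ha.trans hb.symm) hab (e1 ▸ hx) (e2 ▸ hx)

theorem ristN_comm_ne_bot (hm : ∀ n, 2 ≤ m n) (hG : IsBranchGroup m G) (N : Subgroup G)
    [N.FiniteIndex] (v : Vertex m) : ⁅rist G v ⊓ N, rist G v ⊓ N⁆ ≠ ⊥ := by
  intro h
  obtain ⟨f, hf, hf1⟩ := (Subgroup.bot_or_exists_ne_one _).resolve_left (ristN_ne_bot hm hG N v)
  obtain ⟨w, hw⟩ : ∃ w : Vertex m, f • w ≠ w := by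
    by_contra! hcon
    exact hf1 (hG.faithful f hcon)
  have hvw : v.IsPrefix w := by
    by_contra h1
    exact hw (mem_rist.1 hf.1 w h1)
  apply ristN_ne_bot hm hG N w
  rw [eq_bot_iff]
  intro g hg
  have hgv : g ∈ rist G v ⊓ N := ⟨rist_mono hvw hg.1, hg.2⟩
  have h1 : ⁅f, g⁆ ∈ ⁅rist G v ⊓ N, rist G v ⊓ N⁆ := Subgroup.commutator_mem_commutator hf hgv
  rw [h, Subgroup.mem_bot, commutatorElement_eq_one_iff_mul_comm] at h1
  have h2 := rist_conj hG f hg.1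
  rw [h1, mul_inv_cancel_right] at h2
  exact rist_disj hG (smul_level hG f w) hw h2 hg.1

theorem mem_sup_comm {A B : Subgroup G} (h : ∀ a ∈ A, ∀ b ∈ B, a * b = b * a) {x : G}
    (hx : x ∈ A ⊔ B) : ∃ a ∈ A, ∃ b ∈ B, x = a * b := by
  have := MonoidHom.noncommCoprod_range A.subtype B.subtype (fun a b => h a a.2 b b.2)
  rw [Subgroup.range_subtype, Subgroup.range_subtype] at this
  rw [← this] at hx
  obtain ⟨⟨a, b⟩, rfl⟩ := hx
  exact ⟨a, a.2, b, b.2, rfl⟩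

theorem iSup_comm_le {ι : Sort*} (A : ι → Subgroup G) (L : Subgroup G)
    (hn : ∀ i, ∀ a ∈ A i, ∀ l ∈ L, a * l * a⁻¹ ∈ L) (hc : ∀ i j, ⁅A i, A j⁆ ≤ L) :
    ⁅⨆ i, A i, ⨆ i, A i⁆ ≤ L := by
  have hn' : ∀ a ∈ ⨆ i, A i, ∀ l ∈ L, a * l * a⁻¹ ∈ L := by
    intro a ha
    induction ha using Subgroup.iSup_induction' with
    | hp i x hx => exact hn i x hx
    | h1 => intro l hl; simpa using hl
    | hmul x y hx hy ihx ihy =>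
      intro l hl
      have := ihx _ (ihy l hl)
      simpa [mul_assoc] using this
  have step : ∀ c : G, (∀ i, ∀ a ∈ A i, ⁅a, c⁆ ∈ L) → ∀ a ∈ ⨆ i, A i, ⁅a, c⁆ ∈ L := by
    intro c h a ha
    induction ha using Subgroup.iSup_induction' with
    | hp i x hx => exact h i x hx
    | h1 => simp
    | hmul x y hx hy ihx ihy =>
      have := mul_mem (hn' x hx _ ihy) ihx
      have e : x * ⁅y, c⁆ * x⁻¹ * ⁅x, c⁆ = ⁅x * y, c⁆ := by
        simp only [commutatorElement_def]; group
      rwa [e] at this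
  rw [Subgroup.commutator_le]
  intro a ha b hb
  refine step b (fun i x hx => ?_) a ha
  rw [← commutatorElement_inv]
  refine inv_mem (step x (fun j y hy => ?_) b hb)
  exact hc j i (Subgroup.commutator_mem_commutator hy hx)

theorem ristSet_comm (hG : IsBranchGroup m G) (n : ℕ) (W : Set (Vertex m)) (hW : W ⊆ layer m n) :
    ⁅ristSet G W, ristSet G W⁆ ≤ ⨆ w : W, ⁅rist G w.1, rist G w.1⁆ := by
  have e : ristSet G W = ⨆ w : W, rist G w.1 := by
    rw [ristSet, iSup_subtype']
  have cm : ∀ i j : W, i ≠ j → ∀ a ∈ rist G i.1, ∀ b ∈ rist G j.1, a * b = b * a := by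
    intro i j hij a ha b hb
    refine rist_comm hG hb (rist_fix ?_ (fun h => hij (Subtype.ext h)) ha)
    have h1 : i.1.1 = n := hW i.2
    have h2 : j.1.1 = n := hW j.2
    rw [h1, h2]
  rw [e]
  apply iSup_comm_le
  · intro i a ha l hl
    induction hl using Subgroup.iSup_induction' with
    | hp j x hx =>
      refine Subgroup.mem_iSup_of_mem j ?_
      by_cases hij : i = j
      · subst hij
        have hx' := Subgroup.commutator_le_self _ hx
        have h3 := Subgroup.commutator_mem_commutator ha hx'
        have := mul_mem h3 hx
        simpa [commutatorElement_def] using this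
      · rw [cm i j hij a ha x (Subgroup.commutator_le_self _ hx), mul_inv_cancel_right]
        exact hx
    | h1 => simp
    | hmul x y hx hy ihx ihy =>
      have := mul_mem ihx ihy
      simpa [mul_assoc] using this
  · intro i j
    by_cases hij : i = j
    · subst hij
      exact le_iSup (fun w : W => ⁅rist G w.1, rist G w.1⁆) i
    · rw [Subgroup.commutator_le]
      intro a ha b hb
      rw [commutatorElement_eq_one_iff_mul_comm.2 (cm i j hij a ha b hb)]
      exact one_mem _

/-- A nontrivial normal subgroup contains `rist(w)'` for all `w` deep enough. -/
theorem normal_contains (hG : IsBranchGroup m G) (M : Subgroup G)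
    (hM : ∀ g : G, ∀ x ∈ M, g * x * g⁻¹ ∈ M) (hne : M ≠ ⊥) :
    ∃ q, ∀ w : Vertex m, q ≤ w.1 → ⁅rist G w, rist G w⁆ ≤ M := by
  obtain ⟨k, hk⟩ := Subgroup.ne_bot_iff_exists_ne_one.1 hne
  obtain ⟨v, hv⟩ : ∃ v : Vertex m, (k : G) • v ≠ v := by
    by_contra! hcon
    exact hk (Subtype.ext (hG.faithful _ hcon))
  refine ⟨v.1, fun w hw => ?_⟩
  obtain ⟨u, hu, huw⟩ := exists_trunc w v.1 hw
  obtain ⟨g, hg⟩ := hG.trans v u hu.symm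
  have h1 : (g * k * g⁻¹) • u ≠ u := by
    intro h
    apply hv
    rw [← hg] at h
    simpa [mul_smul] using h
  have h2 := key_comm (H := ⊤) hG (fun h _ x hx => hM h x hx) (hM g k k.2) h1
  rw [inf_top_eq] at h2
  exact (Subgroup.commutator_mono (rist_mono huw) (rist_mono huw)).trans h2

theorem deep (hm : ∀ n, 2 ≤ m n) (hG : IsBranchGroup m G) (N : Subgroup G) [hN : N.Normal]
    [N.FiniteIndex] (q : ℕ) :
    ∃ r, q ≤ r ∧ ∀ v w : Vertex m, v.1 = q → v.IsPrefix w → r ≤ w.1 →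
      ⁅rist G w, rist G w⁆ ≤ ⁅rist G v ⊓ N, rist G v ⊓ N⁆ := by
  let D : Vertex m → Subgroup G := fun v => ⁅rist G v ⊓ N, rist G v ⊓ N⁆
  let M : Subgroup G := ⨆ v ∈ layer m q, D v
  have hD : ∀ v, D v ≤ rist G v := fun v => (Subgroup.commutator_le_self _).trans inf_le_left
  have hDM : ∀ v ∈ layer m q, D v ≤ M := fun v hv => le_iSup₂_of_le v hv le_rfl
  have hconj : ∀ g : G, ∀ v, (D v).map (MulAut.conj g).toMonoidHom ≤ D (g • v) := by
    intro g v
    have : (rist G v ⊓ N).map (MulAut.conj g).toMonoidHom ≤ rist G (g • v) ⊓ N := by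
      rintro _ ⟨x, hx, rfl⟩
      exact ⟨rist_conj hG g hx.1, hN.conj_mem x hx.2 g⟩
    change (⁅rist G v ⊓ N, rist G v ⊓ N⁆).map _ ≤ _
    rw [Subgroup.map_commutator]
    exact Subgroup.commutator_mono this this
  have hM : ∀ g : G, ∀ x ∈ M, g * x * g⁻¹ ∈ M := by
    intro g x hx
    have : M ≤ M.comap (MulAut.conj g).toMonoidHom := by
      refine iSup₂_le fun v hv => ?_
      rw [← Subgroup.map_le_iff_le_comap]
      refine (hconj g v).trans (hDM _ ?_)
      exact (smul_level hG g v).trans hv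
    exact this hx
  have hm0 : ∀ i, 0 < m i := fun i => lt_of_lt_of_le (by norm_num) (hm i)
  have hne : M ≠ ⊥ := by
    intro h
    let v : Vertex m := ⟨q, fun i => ⟨0, hm0 i⟩⟩
    apply ristN_comm_ne_bot hm hG N v
    rw [eq_bot_iff, ← h]
    exact hDM v rfl
  obtain ⟨r, hr⟩ := normal_contains hG M hM hne
  refine ⟨max q r, le_max_left _ _, fun v w hv hvw hw x hx => ?_⟩
  have hxM : x ∈ M := hr w (le_trans (le_max_right _ _) hw) hx
  have hxv : x ∈ rist G v := rist_mono hvw (Subgroup.commutator_le_self _ hx)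
  have hle : M ≤ D v ⊔ ristSet G (layer m q \ {v}) := by
    refine iSup₂_le fun u hu => ?_
    by_cases huv : u = v
    · rw [huv]; exact le_sup_left
    · exact ((hD u).trans (rist_le_ristSet (W := layer m q \ {v}) ⟨hu, huv⟩)).trans le_sup_right
  have hfix : ∀ b ∈ ristSet G (layer m q \ {v}), ∀ w, v.IsPrefix w → b • w = w := by
    intro b hb w hw
    refine mem_ristSet hb w fun u hu h => hu.2 ?_
    exact vext h hw (Eq.trans hu.1 hv.symm)
  obtain ⟨a, ha, b, hb, rfl⟩ := mem_sup_comm (fun a ha b hb =>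
    (rist_comm hG (hD v ha) (hfix b hb)).symm) (hle hxM)
  have hbv : b ∈ rist G v := by
    have := mul_mem (inv_mem (hD v ha)) hxv
    simpa using this
  have : b = 1 := by
    apply hG.faithful
    intro w
    by_cases h : v.IsPrefix w
    · exact hfix b hb w h
    · exact mem_rist.1 hbv w h
  rw [this, mul_one]
  exact ha

theorem orbit_stab (hm : ∀ n, 2 ≤ m n) (hG : IsBranchGroup m G) (N : Subgroup G) [hN : N.Normal]
    [N.FiniteIndex] :
    ∃ p, ∀ x y y' : Vertex m, x.1 = p → x.IsPrefix y → x.IsPrefix y' → y.1 = y'.1 →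
      ∃ h ∈ N, h • y = y' := by
  have hm0 : ∀ i, 0 < m i := fun i => lt_of_lt_of_le (by norm_num) (hm i)
  have : Nonempty (Vertex m) := ⟨⟨0, fun i => ⟨0, hm0 i⟩⟩⟩
  let I : Vertex m → ℕ := fun x => (N ⊔ MulAction.stabilizer G x).index
  have hI : ∀ x, I x ≤ N.index := fun x => Subgroup.index_antitone le_sup_left
  let x0 : Vertex m := Function.argmin (fun x => N.index - I x)
  have hmax : ∀ y, I y ≤ I x0 := by
    intro y
    have h : N.index - I x0 ≤ N.index - I y := Function.argmin_le (fun x => N.index - I x) y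
    have := hI y
    have := hI x0
    omega
  have h0 : ∀ y y' : Vertex m, x0.IsPrefix y → x0.IsPrefix y' → y.1 = y'.1 →
      ∃ h ∈ N, h • y = y' := by
    intro y y' hy hy' hl
    obtain ⟨g, hg⟩ := hG.trans y y' hl
    have hgx : g ∈ MulAction.stabilizer G x0 := by
      have h1 := smul_prefix hG g hy
      rw [hg] at h1
      exact vext h1 hy' (smul_level hG g x0)
    have hle : N ⊔ MulAction.stabilizer G y ≤ N ⊔ MulAction.stabilizer G x0 :=
      sup_le_sup_left (fun s hs => stab_le hG hy hs) N
    have h2 := Subgroup.relIndex_mul_index hle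
    have h3 : I x0 ≠ 0 := by
      have : (N ⊔ MulAction.stabilizer G x0).FiniteIndex :=
        Subgroup.finiteIndex_of_le (H := N) le_sup_left
      exact this.index_ne_zero
    have h4 : I y ≠ 0 := by
      have : (N ⊔ MulAction.stabilizer G y).FiniteIndex :=
        Subgroup.finiteIndex_of_le (H := N) le_sup_left
      exact this.index_ne_zero
    have h5 := hmax y
    change _ * I x0 = I y at h2
    have h6 : (N ⊔ MulAction.stabilizer G y).relIndex (N ⊔ MulAction.stabilizer G x0) = 1 := by
      rw [← h2] at h5 h4
      have : 0 < I x0 := Nat.pos_of_ne_zero h3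
      have h7 := left_ne_zero_of_mul h4
      have h8 : (N ⊔ MulAction.stabilizer G y).relIndex (N ⊔ MulAction.stabilizer G x0) ≤ 1 := by
        apply Nat.le_of_mul_le_mul_right _ this
        simpa using h5
      omega
    have h9 : g ∈ N ⊔ MulAction.stabilizer G y :=
      Subgroup.relIndex_eq_one.1 h6 (Subgroup.mem_sup_right hgx)
    obtain ⟨n, hn, s, hs, rfl⟩ := Subgroup.mem_sup_of_normal_left.1 h9
    refine ⟨n, hn, ?_⟩
    rw [mul_smul, MulAction.mem_stabilizer_iff.1 hs] at hg
    exact hg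
  refine ⟨x0.1, fun x y y' hx hy hy' hl => ?_⟩
  obtain ⟨g, hg⟩ := hG.trans x x0 hx
  obtain ⟨h, hh, he⟩ := h0 (g • y) (g • y') (hg ▸ smul_prefix hG g hy)
    (hg ▸ smul_prefix hG g hy') (by rw [smul_level hG, smul_level hG, hl])
  refine ⟨g⁻¹ * h * g, ?_, ?_⟩
  · simpa using hN.conj_mem h hh g⁻¹
  · rw [mul_smul, mul_smul, he, inv_smul_smul]

/-- At some level, each vertex is moved by `K` or `K` fixes its subtree. -/
theorem dichotomy (hm : ∀ n, 2 ≤ m n) (hG : IsBranchGroup m G) (N : Subgroup G) [N.Normal]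
    [N.FiniteIndex] (K : Subgroup G) (hKn : ∀ h ∈ N, ∀ k ∈ K, h * k * h⁻¹ ∈ K) :
    ∃ q, ∀ v : Vertex m, q ≤ v.1 →
      (∃ k ∈ K, k • v ≠ v) ∨ ∀ k ∈ K, ∀ w, v.IsPrefix w → k • w = w := by
  obtain ⟨p, hp⟩ := orbit_stab hm hG N
  have hx : ∀ x : Vertex m, ∃ r : ℕ, x ∈ layer m p → (∀ k ∈ K, ∀ w, x.IsPrefix w → k • w = w) ∨
      ∀ y, x.IsPrefix y → r ≤ y.1 → ∃ k ∈ K, k • y ≠ y := by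
    intro x
    by_cases hf : ∀ k ∈ K, ∀ w, x.IsPrefix w → k • w = w
    · exact ⟨0, fun _ => Or.inl hf⟩
    · push Not at hf
      obtain ⟨k, hk, w, hw, hkw⟩ := hf
      refine ⟨w.1, fun hxp => Or.inr fun y hy hl => ?_⟩
      obtain ⟨u, hu, huy⟩ := exists_trunc y w.1 hl
      have hxu : x.IsPrefix u := prefix_of_le hy huy (by rw [hu]; exact hw.1)
      obtain ⟨h, hh, he⟩ := hp x w u hxp hw hxu hu.symm
      refine ⟨h * k * h⁻¹, hKn h hh k hk, fun hc => hkw ?_⟩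
      have h1 := stab_le hG huy hc
      rw [← he] at h1
      simpa [mul_smul] using h1
  choose r hr using hx
  obtain ⟨B, hB⟩ := ((layer_finite (m := m) p).image r).bddAbove
  refine ⟨max p B, fun v hv => ?_⟩
  obtain ⟨x, hxp, hxv⟩ := exists_trunc v p (le_trans (le_max_left _ _) hv)
  rcases hr x hxp with h | h
  · exact Or.inr fun k hk w hw => h k hk w (prefix_trans hxv hw)
  · refine Or.inl (h v hxv ?_)
    exact (hB ⟨x, hxp, rfl⟩).trans (le_trans (le_max_right _ _) hv)

end Aux

/-- **Main Theorem.** Let `G` be a branch group on `T`, `H ≤ G` of finite index and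
`K ⊴ H`.  Then for all sufficiently large `n` there is a union `X` of `H`-orbits in
`L_n` with `rist_G(X)' ≤ K`, `K ∩ rist_G(L_n \ X) = 1 = [K, rist_G(L_n \ X)]`, and
consequently `K ∩ rist_G(n)' = rist_G(X)'`. -/
theorem main_theorem_normal_in_finite_index
    (m : ℕ → ℕ) (hm : ∀ n, 2 ≤ m n)
    (G : Type*) [Group G] [MulAction G (Vertex m)] (hG : IsBranchGroup m G)
    (H : Subgroup G) [H.FiniteIndex]
    (K : Subgroup G) (hKH : K ≤ H) (hKn : ∀ h ∈ H, ∀ k ∈ K, h * k * h⁻¹ ∈ K) :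
    ∃ n₀ : ℕ, ∀ n ≥ n₀, ∃ X : Set (Vertex m), X ⊆ layer m n ∧
      (∀ h ∈ H, ∀ v ∈ X, h • v ∈ X) ∧
      ⁅ristSet G X, ristSet G X⁆ ≤ K ∧
      K ⊓ ristSet G (layer m n \ X) = ⊥ ∧
      ⁅K, ristSet G (layer m n \ X)⁆ = ⊥ ∧
      K ⊓ ⁅ristLayer m G n, ristLayer m G n⁆ = ⁅ristSet G X, ristSet G X⁆ := by
  classical
  obtain ⟨q, hq⟩ := dichotomy hm hG H.normalCore K
    (fun h hh k hk => hKn h (Subgroup.normalCore_le H hh) k hk)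
  obtain ⟨r, hqr, hr⟩ := deep hm hG H.normalCore q
  refine ⟨r, fun n hn => ?_⟩
  set X : Set (Vertex m) := {v | v ∈ layer m n ∧ ∃ k ∈ K, k • v ≠ v} with hX
  have hXn : X ⊆ layer m n := fun v hv => hv.1
  have hYfix : ∀ v ∈ layer m n \ X, ∀ k ∈ K, ∀ w, v.IsPrefix w → k • w = w := by
    intro v hv
    have hvn : v.1 = n := hv.1
    rcases hq v (by omega) with h | h
    · exact absurd ⟨hv.1, h⟩ hv.2
    · exact h
  have c1 : ⁅ristSet G X, ristSet G X⁆ ≤ K := by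
    refine (ristSet_comm hG n X hXn).trans (iSup_le ?_)
    rintro ⟨w, hwn, k, hk, hkw⟩
    have hwn' : w.1 = n := hwn
    obtain ⟨v, hv, hvw⟩ := exists_trunc w q (by omega)
    refine (hr v w hv hvw (by omega)).trans ?_
    rcases hq v hv.ge with ⟨k', hk', hkv⟩ | h
    · exact key_comm hG
        (fun h hh k hk => hKn h (Subgroup.normalCore_le H hh) k hk) hk' hkv
    · exact absurd (h k hk w hvw) hkw
  have c2 : K ⊓ ristSet G (layer m n \ X) = ⊥ := by
    rw [eq_bot_iff]
    rintro x ⟨hxK, hxY⟩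
    rw [Subgroup.mem_bot]
    apply hG.faithful
    intro w
    by_cases h : ∃ v ∈ layer m n \ X, v.IsPrefix w
    · obtain ⟨v, hv, hvw⟩ := h
      exact hYfix v hv x hxK w hvw
    · push Not at h
      exact mem_ristSet hxY w h
  refine ⟨X, hXn, ?_, c1, c2, ?_, ?_⟩
  · rintro h hh v ⟨hv, k, hk, hkv⟩
    refine ⟨(smul_level hG h v).trans hv, h * k * h⁻¹, hKn h hh k hk, fun hc => hkv ?_⟩
    simpa [mul_smul] using hc
  · rw [Subgroup.commutator_eq_bot_iff_le_centralizer, Subgroup.le_centralizer_iff]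
    refine iSup₂_le fun v hv x hx => ?_
    rw [Subgroup.mem_centralizer_iff]
    intro k hk
    exact rist_comm hG hx (hYfix v hv k hk)
  · apply le_antisymm
    · rintro x ⟨hxK, hx⟩
      have h1 : ⁅ristLayer m G n, ristLayer m G n⁆ ≤
          ⁅ristSet G X, ristSet G X⁆ ⊔ ristSet G (layer m n \ X) := by
        refine (ristSet_comm hG n (layer m n) subset_rfl).trans (iSup_le ?_)
        rintro ⟨w, hw⟩
        by_cases hwX : w ∈ X
        · exact (Subgroup.commutator_mono (rist_le_ristSet hwX)
            (rist_le_ristSet hwX)).trans le_sup_left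
        · exact ((Subgroup.commutator_le_self _).trans
            (rist_le_ristSet (W := layer m n \ X) ⟨hw, hwX⟩)).trans le_sup_right
      have hcomm : ∀ k ∈ K, ∀ b ∈ ristSet G (layer m n \ X), k * b = b * k := by
        intro k hk b hb
        have : ristSet G (layer m n \ X) ≤ Subgroup.centralizer {k} := by
          refine iSup₂_le fun v hv x hx => ?_
          rw [Subgroup.mem_centralizer_singleton_iff]
          exact (rist_comm hG hx (hYfix v hv k hk)).symm
        exact (Subgroup.mem_centralizer_singleton_iff.1 (this hb)).symm
      obtain ⟨a, ha, b, hb, rfl⟩ := mem_sup_comm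
        (fun a ha b hb => hcomm a (c1 ha) b hb) (h1 hx)
      have hbK : b ∈ K := by
        have := mul_mem (inv_mem (c1 ha)) hxK
        simpa using this
      have : b ∈ K ⊓ ristSet G (layer m n \ X) := ⟨hbK, hb⟩
      rw [c2, Subgroup.mem_bot] at this
      rw [this, mul_one]
      exact ha
    · exact le_inf c1 (Subgroup.commutator_mono (ristSet_mono hXn) (ristSet_mono hXn))
end

section
/- Let G be a branch group acting on a rooted tree T and let H be a subgroup of finite index in G. Then H has no non-trivial virtually soluble normal subgroup. -/
/-!  Common definitions: rooted trees of type `(m n)`, tree automorphisms,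
rigid stabilizers, branch groups, and auxiliary notions. -/

universe u

namespace BranchAux

variable {m : ℕ → ℕ}

lemma pre_refl (v : Vertex m) : Vertex.IsPrefix v v := ⟨le_rfl, fun _ => rfl⟩

lemma pre_trans {a b c : Vertex m} (h : Vertex.IsPrefix a b) (h' : Vertex.IsPrefix b c) :
    Vertex.IsPrefix a c := by
  obtain ⟨h1, h2⟩ := h
  obtain ⟨h3, h4⟩ := h'
  refine ⟨h1.trans h3, fun i => ?_⟩
  rw [← h2 i, ← h4 (Fin.castLE h1 i)]
  rfl

lemma pre_eq {a b c : Vertex m} (hl : a.1 = b.1) (h : Vertex.IsPrefix a c)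
    (h' : Vertex.IsPrefix b c) : a = b := by
  obtain ⟨n, a⟩ := a
  obtain ⟨n', b⟩ := b
  obtain ⟨h1, h2⟩ := h
  obtain ⟨h3, h4⟩ := h'
  dsimp only at hl
  subst hl
  congr 1
  funext i
  exact (h2 i).symm.trans (h4 i)

/-- truncation -/
def trunc (w : Vertex m) (n : ℕ) (h : n ≤ w.1) : Vertex m :=
  ⟨n, fun i => w.2 (Fin.castLE h i)⟩

lemma trunc_pre (w : Vertex m) (n : ℕ) (h : n ≤ w.1) : Vertex.IsPrefix (trunc w n h) w :=
  ⟨h, fun _ => rfl⟩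

lemma pre_trunc {v w : Vertex m} (n : ℕ) (h : n ≤ w.1) (hv : v.1 ≤ n)
    (hp : Vertex.IsPrefix v w) : Vertex.IsPrefix v (trunc w n h) := by
  obtain ⟨h1, h2⟩ := hp
  exact ⟨hv, fun i => h2 i⟩

variable {G : Type*} [Group G] [MulAction G (Vertex m)]

lemma level_smul (hG : IsBranchGroup m G) (n : ℕ) : ∀ (g : G) (v : Vertex m), v.1 = n →
    (g • v).1 = n := by
  induction n with
  | zero =>
    intro g v hv
    by_contra hne
    obtain ⟨k, hk⟩ := Nat.exists_eq_succ_of_ne_zero hne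
    have hc : Vertex.IsChild (trunc (g • v) k (by omega)) (g • v) := ⟨hk, trunc_pre _ _ _⟩
    have := ((hG.aut g⁻¹ _ _).1 hc).1
    rw [inv_smul_smul] at this
    omega
  | succ n ih =>
    intro g v hv
    have hc : Vertex.IsChild (trunc v n (by omega)) v := ⟨hv, trunc_pre _ _ _⟩
    have h1 := ((hG.aut g _ _).1 hc).1
    rw [h1, ih g _ rfl]

lemma pre_smul (hG : IsBranchGroup m G) (g : G) (v : Vertex m) (n : ℕ) : ∀ (w : Vertex m),
    w.1 = v.1 + n → Vertex.IsPrefix v w → Vertex.IsPrefix (g • v) (g • w) := by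
  induction n with
  | zero =>
    intro w hw h
    rw [pre_eq (by omega) h (pre_refl w)]
    exact pre_refl _
  | succ n ih =>
    intro w hw h
    have hc : Vertex.IsChild (trunc w (v.1 + n) (by omega)) w := ⟨hw, trunc_pre _ _ _⟩
    exact pre_trans (ih _ rfl (pre_trunc _ _ (by omega) h)) ((hG.aut g _ _).1 hc).2

lemma pre_smul' (hG : IsBranchGroup m G) (g : G) {v w : Vertex m}
    (h : Vertex.IsPrefix v w) : Vertex.IsPrefix (g • v) (g • w) :=
  pre_smul hG g v (w.1 - v.1) w (by have := h.1; omega) h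

lemma mem_rist {g : G} {v : Vertex m} :
    g ∈ rist G v ↔ ∀ w, ¬ Vertex.IsPrefix v w → g • w = w := by
  simp [rist, Subgroup.mem_iInf, MulAction.mem_stabilizer_iff]

lemma rist_mono {v u : Vertex m} (h : Vertex.IsPrefix v u) {g : G} (hg : g ∈ rist G u) :
    g ∈ rist G v := by
  rw [mem_rist] at *
  exact fun w hw => hg w fun h' => hw (pre_trans h h')

lemma rist_conj (hG : IsBranchGroup m G) {v : Vertex m} {a : G} (k : G) (ha : a ∈ rist G v) :
    k * a * k⁻¹ ∈ rist G (k • v) := by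
  rw [mem_rist] at *
  intro w hw
  rw [mul_smul, mul_smul, ha, smul_inv_smul]
  intro h
  apply hw
  have := pre_smul' hG k h
  rwa [smul_inv_smul] at this

/-- no common extension -/
def Incomp (v w : Vertex m) : Prop := ∀ x, Vertex.IsPrefix v x → ¬ Vertex.IsPrefix w x

lemma rist_disj (hG : IsBranchGroup m G) {v w : Vertex m} (h : Incomp v w) {a : G}
    (ha : a ∈ rist G v) (hb : a ∈ rist G w) : a = 1 := by
  apply hG.faithful
  intro x
  by_cases hx : Vertex.IsPrefix v x
  · exact mem_rist.1 hb x (h x hx)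
  · exact mem_rist.1 ha x hx

lemma rist_stay {v x : Vertex m} {a : G} (ha : a ∈ rist G v) (hx : Vertex.IsPrefix v x) :
    Vertex.IsPrefix v (a • x) := by
  by_contra hc
  have h1 := mem_rist.1 ha _ hc
  have h2 := smul_left_cancel a h1
  rw [h2] at hc
  exact hc hx

lemma rist_comm (hG : IsBranchGroup m G) {v w : Vertex m} (h : Incomp v w) {a b : G}
    (ha : a ∈ rist G v) (hb : b ∈ rist G w) : a * b = b * a := by
  suffices hh : (b * a)⁻¹ * (a * b) = 1 by
    rw [inv_mul_eq_one] at hh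
    exact hh.symm
  apply hG.faithful
  intro x
  rw [mul_smul, inv_smul_eq_iff, mul_smul, mul_smul]
  by_cases hx : Vertex.IsPrefix v x
  · rw [mem_rist.1 hb x (h x hx), mem_rist.1 hb _ (h _ (rist_stay ha hx))]
  · rw [mem_rist.1 ha x hx]
    by_cases hy : Vertex.IsPrefix w x
    · exact mem_rist.1 ha _ fun h' => h _ h' (rist_stay hb hy)
    · rw [mem_rist.1 hb x hy, mem_rist.1 ha x hx]

lemma incomp_moved (hG : IsBranchGroup m G) {x : Vertex m} {k : G} (h : k • x ≠ x) :
    Incomp x (k • x) := fun _ h1 h2 => h (pre_eq (level_smul hG _ k x rfl) h2 h1)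

/-- the comb below `v` -/
def comb (hm : ∀ n, 2 ≤ m n) (v : Vertex m) (i : ℕ) : Vertex m :=
  ⟨v.1 + i + 1, fun j => if h : j.1 < v.1 then v.2 ⟨j.1, h⟩ else
    if j.1 = v.1 + i then ⟨1, hm j⟩ else ⟨0, by have := hm j; omega⟩⟩

lemma pre_comb (hm : ∀ n, 2 ≤ m n) (v : Vertex m) (i : ℕ) :
    Vertex.IsPrefix v (comb hm v i) := by
  refine ⟨by simp only [comb]; omega, fun j => ?_⟩
  exact dif_pos j.2

lemma comb_incomp_lt (hm : ∀ n, 2 ≤ m n) (v : Vertex m) {i j : ℕ} (h : i < j) :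
    Incomp (comb hm v i) (comb hm v j) := by
  rintro x ⟨h1, h2⟩ ⟨h3, h4⟩
  have e1 := h2 ⟨v.1 + i, by simp only [comb]; omega⟩
  have e2 := h4 ⟨v.1 + i, by simp only [comb]; omega⟩
  have e3 := e1.symm.trans e2
  have e4 := congrArg Fin.val e3
  have hne : i ≠ j := h.ne
  simp [comb, hne] at e4

lemma comb_incomp (hm : ∀ n, 2 ≤ m n) (v : Vertex m) {i j : ℕ} (h : i ≠ j) :
    Incomp (comb hm v i) (comb hm v j) := by
  rcases lt_or_gt_of_ne h with h | h
  · exact comb_incomp_lt hm v h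
  · exact fun x h1 h2 => comb_incomp_lt hm v h x h2 h1

lemma infinite_G (hm : ∀ n, 2 ≤ m n) (hG : IsBranchGroup m G) : Infinite G := by
  by_contra hfin
  rw [not_infinite_iff_finite] at hfin
  let N := Nat.card G
  let v0 : Vertex m := ⟨N, fun i => ⟨0, by have := hm i; omega⟩⟩
  choose f hf using fun s : (∀ i : Fin N, Fin (m i)) => hG.trans v0 ⟨N, s⟩ rfl
  have hinj : Function.Injective f := by
    intro s t hst
    have h1 := hf s
    rw [hst, hf t] at h1
    exact (eq_of_heq (Sigma.mk.inj h1).2).symm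
  have h1 := Nat.card_le_card_of_injective f hinj
  rw [Nat.card_eq_fintype_card, Fintype.card_pi] at h1
  simp only [Fintype.card_fin] at h1
  have h2 : 2 ^ N ≤ ∏ i : Fin N, m i := by
    have := Finset.prod_le_prod' (s := Finset.univ) (f := fun _ : Fin N => 2)
      (g := fun i : Fin N => m i) (fun i _ => hm i)
    simpa using this
  have h3 : N < 2 ^ N := Nat.lt_two_pow_self
  have h4 : ∏ i : Fin N, m i ≤ N := h1
  omega

/-- `P` meets every rigid stabilizer below `v`. -/
def Thick (P : Subgroup G) (v : Vertex m) : Prop :=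
  ∀ u, Vertex.IsPrefix v u → ∃ g ∈ P, g ∈ rist G u ∧ g ≠ 1

lemma thick_top (hm : ∀ n, 2 ≤ m n) (hG : IsBranchGroup m G) (v : Vertex m) :
    Thick (⊤ : Subgroup G) v := by
  intro u _
  by_contra! hc
  have hb : ristLayer m G u.1 = ⊥ := by
    rw [ristLayer, ristSet, eq_bot_iff]
    refine iSup₂_le fun w hw g hg => ?_
    obtain ⟨k, hk⟩ := hG.trans w u hw
    have h1 := rist_conj hG k hg
    rw [hk] at h1
    have h2 := hc _ (Subgroup.mem_top _) h1
    rw [Subgroup.mem_bot]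
    simpa using h2
  have h1 := hG.ristFiniteIndex u.1
  rw [hb] at h1
  have h2 := h1.index_ne_zero
  rw [Subgroup.index_bot] at h2
  have := infinite_G hm hG
  exact h2 Nat.card_eq_zero_of_infinite

lemma thick_finite (hm : ∀ n, 2 ≤ m n) (hG : IsBranchGroup m G) {v : Vertex m}
    {P S : Subgroup G} (hP : Thick P v) (hS : S.relIndex P ≠ 0) : Thick S v := by
  intro u hu
  choose g hgP hgr hg1 using fun i => hP (comb hm u i) (pre_trans hu (pre_comb hm u i))
  have : (S.subgroupOf P).FiniteIndex := ⟨hS⟩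
  obtain ⟨i, j, hij, he⟩ := Finite.exists_ne_map_eq_of_infinite
    (fun i => ((⟨g i, hgP i⟩ : P) : P ⧸ S.subgroupOf P))
  rw [QuotientGroup.eq, Subgroup.mem_subgroupOf] at he
  refine ⟨(g i)⁻¹ * g j, by simpa using he, mul_mem (inv_mem ?_) ?_, fun h => ?_⟩
  · exact rist_mono (pre_comb hm u i) (hgr i)
  · exact rist_mono (pre_comb hm u j) (hgr j)
  · rw [inv_mul_eq_one] at h
    refine hg1 i (rist_disj hG (comb_incomp hm u hij) (hgr i) ?_)
    rw [h]
    exact hgr j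

lemma exists_moved (hG : IsBranchGroup m G) {g : G} (hg : g ≠ 1) : ∃ v : Vertex m, g • v ≠ v := by
  by_contra! h
  exact hg (hG.faithful g h)

lemma thick_noncomm (hG : IsBranchGroup m G) {v : Vertex m}
    {P : Subgroup G} (hP : Thick P v) (u : Vertex m) (hu : Vertex.IsPrefix v u) :
    ∃ a ∈ P, ∃ b ∈ P, a ∈ rist G u ∧ b ∈ rist G u ∧ a * b ≠ b * a := by
  obtain ⟨k, hk, hkr, hk1⟩ := hP u hu
  obtain ⟨x, hx⟩ := exists_moved hG hk1
  have hux : Vertex.IsPrefix u x := by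
    by_contra h
    exact hx (mem_rist.1 hkr x h)
  obtain ⟨a, ha, har, ha1⟩ := hP x (pre_trans hu hux)
  refine ⟨k, hk, a, ha, hkr, rist_mono hux har, fun h => ha1 ?_⟩
  have h1 := rist_conj hG k har
  rw [h, mul_inv_cancel_right] at h1
  exact rist_disj hG (incomp_moved hG hx) har h1

lemma thick_commutator (hG : IsBranchGroup m G) {v : Vertex m}
    {P : Subgroup G} (hP : Thick P v) : Thick ⁅P, P⁆ v := by
  intro u hu
  obtain ⟨a, ha, b, hb, har, hbr, hab⟩ := thick_noncomm hG hP u hu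
  refine ⟨a * b * a⁻¹ * b⁻¹, Subgroup.commutator_mem_commutator ha hb, ?_, ?_⟩
  · exact mul_mem (mul_mem (mul_mem har hbr) (inv_mem har)) (inv_mem hbr)
  · intro h
    apply hab
    rwa [mul_inv_eq_one, mul_inv_eq_iff_eq_mul] at h

lemma thick_not_solvable (hG : IsBranchGroup m G) {v : Vertex m} {K : Subgroup G}
    {S : Subgroup K} (hP : Thick (S.map K.subtype) v) (hs : IsSolvable S) : False := by
  obtain ⟨n, hn⟩ := hs.solvable
  have key : ∀ n, Thick (((derivedSeries S n).map S.subtype).map K.subtype) v := by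
    intro n
    induction n with
    | zero => simpa [derivedSeries_zero, ← MonoidHom.range_eq_map] using hP
    | succ n ih =>
      rw [derivedSeries_succ, Subgroup.map_commutator, Subgroup.map_commutator]
      exact thick_commutator hG ih
  have h := key n
  rw [hn, Subgroup.map_bot, Subgroup.map_bot] at h
  obtain ⟨g, hg, _, hg1⟩ := h v (pre_refl v)
  exact hg1 (Subgroup.mem_bot.1 hg)

end BranchAux

/-- **Lemma.** If `G` is a branch group on `T` and `H ≤ G` has finite index, then `H`
has no non-trivial virtually soluble normal subgroup. -/
theorem no_virtually_solvable_normal_subgroup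
    (m : ℕ → ℕ) (hm : ∀ n, 2 ≤ m n)
    (G : Type*) [Group G] [MulAction G (Vertex m)] (hG : IsBranchGroup m G)
    (H : Subgroup G) [H.FiniteIndex]
    (K : Subgroup G) (hKH : K ≤ H) (hKn : ∀ h ∈ H, ∀ k ∈ K, h * k * h⁻¹ ∈ K)
    (hsol : VirtuallySolvable ↥K) :
    K = ⊥ := by
  obtain ⟨S, hS, hsolv⟩ := hsol
  by_contra hK
  obtain ⟨k, hk, hk1⟩ := K.bot_or_exists_ne_one.resolve_left hK
  obtain ⟨w, hw⟩ := BranchAux.exists_moved hG hk1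
  have hH : BranchAux.Thick H w := BranchAux.thick_finite hm hG (BranchAux.thick_top hm hG w)
    (by rw [Subgroup.relIndex_top_right]; exact Subgroup.FiniteIndex.index_ne_zero)
  have hT : BranchAux.Thick K w := by
    intro u hu
    obtain ⟨a, ha, b, hb, har, hbr, hab⟩ := BranchAux.thick_noncomm hG hH u hu
    have hc : a⁻¹ * (k * a * k⁻¹) ∈ K := by
      have h1 := mul_mem (hKn a⁻¹ (inv_mem ha) k hk) (inv_mem hk)
      simpa [mul_assoc] using h1
    have hcomm : b * (k * a * k⁻¹) = (k * a * k⁻¹) * b :=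
      BranchAux.rist_comm hG (BranchAux.incomp_moved hG hw) (BranchAux.rist_mono hu hbr)
        (BranchAux.rist_conj hG k (BranchAux.rist_mono hu har))
    have hd := mul_mem hc (hKn b hb _ (inv_mem hc))
    have he : a⁻¹ * (k * a * k⁻¹) * (b * (a⁻¹ * (k * a * k⁻¹))⁻¹ * b⁻¹) =
        a⁻¹ * b * a * b⁻¹ := by
      generalize k * a * k⁻¹ = c at hcomm
      calc a⁻¹ * c * (b * (a⁻¹ * c)⁻¹ * b⁻¹) = a⁻¹ * (c * b) * c⁻¹ * a * b⁻¹ := by group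
        _ = a⁻¹ * b * a * b⁻¹ := by rw [← hcomm]; group
    rw [he] at hd
    refine ⟨_, hd, mul_mem (mul_mem (mul_mem (inv_mem har) hbr) har) (inv_mem hbr), fun h => ?_⟩
    apply hab
    rw [mul_inv_eq_one, mul_assoc, inv_mul_eq_iff_eq_mul] at h
    exact h.symm
  have hTS : BranchAux.Thick (S.map K.subtype) w := by
    refine BranchAux.thick_finite hm hG hT ?_
    rw [Subgroup.relIndex, Subgroup.subgroupOf,
      Subgroup.comap_map_eq_self_of_injective K.subtype_injective]
    exact hS.index_ne_zero
  exact BranchAux.thick_not_solvable hG hTS hsolv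
end
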